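/- Let H be a complex Hilbert space and (T_h) a family of bounded operators converging in operator norm to a compact operator T on H. Let λ ≠ 0 be an eigenvalue of the eigenproblem T u = λ⁻¹ u with ascent 1. Then for h small enough there exist eigenvalues λ_h of T_h u_h = λ_h⁻¹ u_h with λ_h → λ, and for each normalized eigenvector u_h of T_h corresponding to λ_h there is an eigenvector u of T corresponding to λ with ‖u_h - u‖ → 0 as h → 0. -/

import Mathlib

open Filter Topology

lemma aux_subseq {H : Type*} [NormedAddCommGroup H] [InnerProductSpace ℂ H]
    (T : H →L[ℂ] H) (hT : IsCompactOperator T) {μ : ℂ} (hμ : μ ≠ 0)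
    (x : ℕ → H) (M : ℝ) (hx : ∀ n, ‖x n‖ ≤ M) (y : H)
    (hy : Tendsto (fun n => μ • x n - T (x n)) atTop (𝓝 y)) :
    ∃ (w : H) (φ : ℕ → ℕ), StrictMono φ ∧ Tendsto (fun n => x (φ n)) atTop (𝓝 w) ∧
      μ • w - T w = y := by
  obtain ⟨K, hK, hK'⟩ := hT.image_closedBall_subset_compact M
  obtain ⟨v, -, φ, hφ, hv⟩ := hK.tendsto_subseq (x := fun n => T (x n))
    (fun n => hK' ⟨x n, by simpa using hx n, rfl⟩)
  have h1 : Tendsto (fun n => x (φ n)) atTop (𝓝 (μ⁻¹ • (y + v))) := by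
    have := ((hy.comp hφ.tendsto_atTop).add hv).const_smul μ⁻¹
    refine this.congr fun n => ?_
    simp [smul_smul, inv_mul_cancel₀ hμ]
  refine ⟨_, φ, hφ, h1, ?_⟩
  have h2 := (h1.const_smul μ).sub ((T.continuous.tendsto _).comp h1)
  exact tendsto_nhds_unique h2 (hy.comp hφ.tendsto_atTop)

lemma aux_lower {H : Type*} [NormedAddCommGroup H] [InnerProductSpace ℂ H]
    (T : H →L[ℂ] H) (hT : IsCompactOperator T) {μ : ℂ} (hμ : μ ≠ 0)
    (K : Submodule ℂ H) (hK : ∀ x, x ∈ K ↔ T x = μ • x) :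
    ∃ C : ℝ, ∀ x ∈ Kᗮ, ‖x‖ ≤ C * ‖μ • x - T x‖ := by
  by_contra! hcon
  choose x hx hlt using fun n : ℕ => hcon n
  have hpos : ∀ n, 0 < ‖x n‖ := fun n => lt_of_le_of_lt (by positivity) (hlt n)
  let y : ℕ → H := fun n => ((‖x n‖⁻¹ : ℝ) : ℂ) • x n
  have hy1 : ∀ n, ‖y n‖ = 1 := fun n => by
    simp [y, norm_smul, (hpos n).ne']
  have hA : ∀ n, μ • y n - T (y n) = ((‖x n‖⁻¹ : ℝ) : ℂ) • (μ • x n - T (x n)) := fun n => by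
    simp only [y, map_smul, smul_sub]
    rw [smul_comm]
  have hlim : Tendsto (fun n => μ • y n - T (y n)) atTop (𝓝 0) := by
    rw [← tendsto_add_atTop_iff_nat 1]
    refine squeeze_zero_norm (fun n => ?_) tendsto_one_div_add_atTop_nhds_zero_nat
    rw [hA, norm_smul]
    have h := hlt (n + 1)
    have h2 := hpos (n + 1)
    push_cast at h
    simp only [Complex.norm_real, norm_inv, norm_norm]
    rw [inv_mul_eq_div, div_le_div_iff₀ h2 (by positivity)]
    linarith
  obtain ⟨w, φ, hφ, hw, hw0⟩ := aux_subseq T hT hμ y 1 (fun n => (hy1 n).le) 0 hlim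
  have hwK : w ∈ K := (hK w).2 (sub_eq_zero.1 hw0).symm
  have hwo : w ∈ Kᗮ := K.isClosed_orthogonal.mem_of_tendsto hw
    (Eventually.of_forall fun n => Kᗮ.smul_mem _ (hx _))
  have hw1 : ‖w‖ = 1 := tendsto_nhds_unique hw.norm (by simp [hy1])
  have : inner ℂ w w = 0 := hwo w hwK
  rw [inner_self_eq_zero] at this
  simp [this] at hw1

lemma aux_isolated {H : Type*} [NormedAddCommGroup H] [InnerProductSpace ℂ H]
    (T : H →L[ℂ] H) (hT : IsCompactOperator T) {μ : ℂ} (hμ : μ ≠ 0)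
    (K : Submodule ℂ H) [K.HasOrthogonalProjection] (hK : ∀ x, x ∈ K ↔ T x = μ • x)
    (hasc : ∀ x, T (μ • x - T x) = μ • (μ • x - T x) → T x = μ • x) :
    ∃ r > 0, ∀ z : ℂ, z ≠ μ → ‖z - μ‖ ≤ r → ∀ v, T v = z • v → v = 0 := by
  obtain ⟨C, hC⟩ := aux_lower T hT hμ K hK
  by_contra! hcon
  choose z hz hzr v hv hv0 using fun n : ℕ => hcon (1 / ((n : ℝ) + 1)) (by positivity)
  let y : ℕ → H := fun n => ((‖v n‖⁻¹ : ℝ) : ℂ) • v n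
  have hy1 : ∀ n, ‖y n‖ = 1 := fun n => by
    simp [y, norm_smul, hv0 n]
  have hTy : ∀ n, T (y n) = z n • y n := fun n => by
    simp only [y, map_smul, hv]
    rw [smul_comm]
  have hA : ∀ n, μ • y n - T (y n) = (μ - z n) • y n := fun n => by
    rw [hTy, sub_smul]
  have hlim : Tendsto (fun n => μ • y n - T (y n)) atTop (𝓝 0) := by
    refine squeeze_zero_norm (fun n => ?_) tendsto_one_div_add_atTop_nhds_zero_nat
    rw [hA, norm_smul, hy1, mul_one, norm_sub_rev]
    exact hzr n
  obtain ⟨y₀, φ, hφ, hy₀, hy₀0⟩ := aux_subseq T hT hμ y 1 (fun n => (hy1 n).le) 0 hlim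
  have hy₀1 : ‖y₀‖ = 1 := tendsto_nhds_unique hy₀.norm (by simp [hy1])
  clear_value y
  let w : ℕ → H := fun n => (μ - z n)⁻¹ • y n - K.starProjection ((μ - z n)⁻¹ • y n)
  have hwo : ∀ n, w n ∈ Kᗮ := fun n => K.sub_starProjection_mem_orthogonal _
  have hAw : ∀ n, μ • w n - T (w n) = y n := fun n => by
    have h1 : T (K.starProjection ((μ - z n)⁻¹ • y n)) =
      μ • K.starProjection ((μ - z n)⁻¹ • y n) := (hK _).1 (K.starProjection_apply_mem _)
    have h2 : μ - z n ≠ 0 := sub_ne_zero.2 (hz n).symm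
    simp only [w]
    rw [map_sub, h1, smul_sub, sub_sub_sub_cancel_right, map_smul, hTy, smul_smul, smul_smul, ← sub_smul]
    rw [mul_comm μ, ← mul_sub, inv_mul_cancel₀ h2, one_smul]
  have hwb : ∀ n, ‖w n‖ ≤ C := fun n => by
    simpa [hAw, hy1] using hC _ (hwo n)
  obtain ⟨w₀, ψ, -, -, hw₀⟩ := aux_subseq T hT hμ (fun n => w (φ n)) C (fun n => hwb _) y₀
    (by simpa only [hAw] using hy₀)
  have := hasc w₀ (by rw [hw₀]; exact (sub_eq_zero.1 hy₀0).symm)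
  rw [this, sub_self] at hw₀
  simp [← hw₀] at hy₀1

lemma aux_fredholm {H : Type*} [NormedAddCommGroup H] [InnerProductSpace ℂ H]
    [CompleteSpace H] [Nontrivial H]
    (T : H →L[ℂ] H) (hT : IsCompactOperator T) (S : H →L[ℂ] H) {z : ℂ}
    (hz : ‖S - T‖ < ‖z‖) (hs : z ∈ spectrum ℂ S) : ∃ u : H, u ≠ 0 ∧ S u = z • u := by
  have hG : IsUnit (algebraMap ℂ (H →L[ℂ] H) z - (S - T)) :=
    spectrum.mem_resolventSet_of_norm_lt hz
  obtain ⟨G, hG⟩ := hG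
  have hQ : IsCompactOperator ((↑G⁻¹ : H →L[ℂ] H) * T) := hT.clm_comp (↑G⁻¹ : H →L[ℂ] H)
  rcases hQ.hasEigenvalue_or_mem_resolventSet (μ := (1 : ℂ)) one_ne_zero with h | h
  · obtain ⟨u, hu⟩ := h.exists_hasEigenvector
    refine ⟨u, hu.2, ?_⟩
    have h1 : (↑G⁻¹ : H →L[ℂ] H) (T u) = u := by simpa using hu.apply_eq_smul
    have h2 : (↑G : H →L[ℂ] H) ((↑G⁻¹ : H →L[ℂ] H) (T u)) = T u := by
      rw [← ContinuousLinearMap.mul_apply, Units.mul_inv]; rfl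
    rw [h1, hG] at h2
    simp [Algebra.algebraMap_eq_smul_one] at h2
    have h3 : z • u - S u = 0 := by
      have : z • u - S u = (z • u - (S u - T u)) - T u := by abel
      rw [this, h2, sub_self]
    exact (sub_eq_zero.1 h3).symm
  · exfalso
    apply hs
    rw [spectrum.mem_resolventSet_iff] at h ⊢
    have := G.isUnit.mul h
    convert! this using 1
    rw [mul_sub, ← mul_assoc, Units.mul_inv, hG]
    simp only [map_one, mul_one, one_mul]
    abel

lemma aux_exists {H : Type*} [NormedAddCommGroup H] [InnerProductSpace ℂ H]
    [CompleteSpace H] [Nontrivial H]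
    (T : H →L[ℂ] H) (μ : ℂ) (u₀ : H) (hu₀ : u₀ ≠ 0) (hTu₀ : T u₀ = μ • u₀)
    {r : ℝ} (hr : 0 < r) (hres : ∀ z, ‖z - μ‖ = r → z ∈ resolventSet ℂ T) :
    ∃ δ > 0, ∀ S : H →L[ℂ] H, ‖S - T‖ < δ → ∃ z ∈ spectrum ℂ S, ‖z - μ‖ ≤ r := by
  have hcont : ContinuousOn (resolvent T) (Metric.sphere μ r) := fun z hz =>
    (spectrum.hasDerivAt_resolvent (hres z (by simpa [dist_eq_norm] using hz))).continuousAt.continuousWithinAt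
  obtain ⟨M₀, hM₀⟩ := (isCompact_sphere μ r).exists_bound_of_continuousOn hcont
  set M := max M₀ 1
  have hM1 : 1 ≤ M := le_max_right _ _
  have hM : ∀ z ∈ Metric.sphere μ r, ‖resolvent T z‖ ≤ M := fun z hz =>
    (hM₀ z hz).trans (le_max_left _ _)
  refine ⟨1 / (2 * M), by positivity, fun S hS => ?_⟩
  rw [lt_div_iff₀ (by positivity)] at hS
  by_contra! hcon
  have hρ : ∀ z, ‖z - μ‖ ≤ r → z ∈ resolventSet ℂ S := fun z hz => by
    by_contra h
    exact absurd (hcon z h) (not_lt.2 hz)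
  have hdiff : DiffContOnCl ℂ (resolvent S) (Metric.ball μ r) := by
    apply DifferentiableOn.diffContOnCl
    intro z hz
    rw [closure_ball _ hr.ne', mem_closedBall_iff_norm] at hz
    exact (spectrum.hasDerivAt_resolvent (hρ z hz)).differentiableAt.differentiableWithinAt
  have hb : ∀ z ∈ frontier (Metric.ball μ r), ‖resolvent S z‖ ≤ 2 * M := by
    intro z hz
    rw [frontier_ball _ hr.ne'] at hz
    have hz' : ‖z - μ‖ = r := by simpa [dist_eq_norm] using hz
    have hRT : resolvent T z * (algebraMap ℂ _ z - T) = 1 :=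
      Ring.inverse_mul_cancel _ (hres z hz')
    have hRS : (algebraMap ℂ _ z - S) * resolvent S z = 1 :=
      Ring.mul_inverse_cancel _ (hρ z hz'.le)
    have key : resolvent S z = resolvent T z + resolvent T z * (S - T) * resolvent S z := by
      calc resolvent S z = resolvent T z * (algebraMap ℂ _ z - T) * resolvent S z := by
            rw [hRT, one_mul]
        _ = resolvent T z * ((algebraMap ℂ _ z - S) * resolvent S z)
            + resolvent T z * (S - T) * resolvent S z := by noncomm_ring
        _ = _ := by rw [hRS, mul_one]
    have h1 : ‖resolvent S z‖ ≤ M + M * ‖S - T‖ * ‖resolvent S z‖ := by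
      calc ‖resolvent S z‖ = ‖resolvent T z + resolvent T z * (S - T) * resolvent S z‖ := by
            rw [← key]
        _ ≤ ‖resolvent T z‖ + ‖resolvent T z‖ * ‖S - T‖ * ‖resolvent S z‖ := by
            refine (norm_add_le _ _).trans (add_le_add le_rfl ?_)
            refine (norm_mul_le _ _).trans ?_
            gcongr
            exact norm_mul_le _ _
        _ ≤ _ := by
            have := hM z hz
            gcongr
    have h2 : M * ‖S - T‖ * ‖resolvent S z‖ ≤ 1 / 2 * ‖resolvent S z‖ := by
      gcongr
      linarith
    linarith
  have hc := Complex.norm_le_of_forall_mem_frontier_norm_le Metric.isBounded_ball hdiff hb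
    (subset_closure (Metric.mem_ball_self hr))
  have hR : resolvent S μ * (algebraMap ℂ _ μ - S) = 1 :=
    Ring.inverse_mul_cancel _ (hρ μ (by simpa using hr.le))
  have h3 : u₀ = resolvent S μ ((T - S) u₀) := by
    have : (T - S) u₀ = (algebraMap ℂ (H →L[ℂ] H) μ - S) u₀ := by
      simp [Algebra.algebraMap_eq_smul_one, hTu₀]
    rw [this, ← ContinuousLinearMap.mul_apply, hR]; rfl
  have hn : 0 < ‖u₀‖ := norm_pos_iff.2 hu₀
  have h4 : ‖u₀‖ ≤ 2 * M * (‖S - T‖ * ‖u₀‖) := by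
    calc ‖u₀‖ = ‖resolvent S μ ((T - S) u₀)‖ := by rw [← h3]
      _ ≤ ‖resolvent S μ‖ * ‖(T - S) u₀‖ := ContinuousLinearMap.le_opNorm _ _
      _ ≤ _ := by
        rw [norm_sub_rev S T]
        gcongr
        exact ContinuousLinearMap.le_opNorm _ _
  nlinarith

lemma aux_proj {H : Type*} [NormedAddCommGroup H] [InnerProductSpace ℂ H]
    (T : H →L[ℂ] H) (hT : IsCompactOperator T) {μ : ℂ} (hμ : μ ≠ 0)
    (K : Submodule ℂ H) [K.HasOrthogonalProjection] (hK : ∀ x, x ∈ K ↔ T x = μ • x)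
    (x : ℕ → H) (hx : Tendsto (fun n => μ • x n - T (x n)) atTop (𝓝 0)) :
    Tendsto (fun n => ‖x n - K.starProjection (x n)‖) atTop (𝓝 0) := by
  obtain ⟨C, hC⟩ := aux_lower T hT hμ K hK
  have h1 : Tendsto (fun n => C * ‖μ • x n - T (x n)‖) atTop (𝓝 0) := by
    simpa using hx.norm.const_mul C
  refine squeeze_zero (fun n => norm_nonneg _) (fun n => ?_) h1
  have h2 := hC _ (K.sub_starProjection_mem_orthogonal (x n))
  have h3 : T (K.starProjection (x n)) = μ • K.starProjection (x n) :=
    (hK _).1 (K.starProjection_apply_mem _)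
  rwa [map_sub, smul_sub, h3, sub_sub_sub_cancel_right] at h2


/-- Spectral approximation (Babuška–Osborn): norm convergence `‖T - T_h‖ → 0`
to a compact operator implies convergence of discrete eigenvalues and
eigenfunctions for an eigenvalue `λ ≠ 0` of ascent 1. -/
theorem stmt_12 {H : Type*} [NormedAddCommGroup H] [InnerProductSpace ℂ H]
    [CompleteSpace H]
    (T : H →L[ℂ] H) (hT : IsCompactOperator T)
    (Th : ℕ → H →L[ℂ] H)
    (hconv : Tendsto (fun h => ‖Th h - T‖) atTop (𝓝 0))
    (lam : ℂ) (hlam : lam ≠ 0)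
    (u₀ : H) (hu₀ : u₀ ≠ 0) (hTu₀ : T u₀ = lam⁻¹ • u₀)
    (hascent : ∀ x : H, (lam⁻¹ • (1 : H →L[ℂ] H) - T) ((lam⁻¹ • (1 : H →L[ℂ] H) - T) x) = 0 →
      (lam⁻¹ • (1 : H →L[ℂ] H) - T) x = 0) :
    ∃ (N : ℕ) (lamh : ℕ → ℂ),
      (∀ h ≥ N, ∃ uh : H, uh ≠ 0 ∧ Th h uh = (lamh h)⁻¹ • uh) ∧
      Tendsto lamh atTop (𝓝 lam) ∧
      ∀ uh : ℕ → H,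
        (∀ h ≥ N, ‖uh h‖ = 1 ∧ Th h (uh h) = (lamh h)⁻¹ • uh h) →
        ∃ u : ℕ → H,
          (∀ h, u h ≠ 0 ∧ T (u h) = lam⁻¹ • u h) ∧
          Tendsto (fun h => ‖uh h - u h‖) atTop (𝓝 0) := by
  classical
  have : Nontrivial H := ⟨u₀, 0, hu₀⟩
  set μ : ℂ := lam⁻¹ with hμdef
  have hμ : μ ≠ 0 := inv_ne_zero hlam
  let K : Submodule ℂ H := LinearMap.ker ((μ • (1 : H →L[ℂ] H) - T : H →L[ℂ] H) : H →ₗ[ℂ] H)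
  have hK : ∀ x, x ∈ K ↔ T x = μ • x := fun x => by
    simp only [K, LinearMap.mem_ker]
    exact sub_eq_zero.trans eq_comm
  have hKc : IsClosed (K : Set H) := (μ • (1 : H →L[ℂ] H) - T).isClosed_ker
  have : CompleteSpace K := hKc.completeSpace_coe
  have hasc : ∀ x, T (μ • x - T x) = μ • (μ • x - T x) → T x = μ • x := fun x hx => by
    have := hascent x (by
      simp only [ContinuousLinearMap.sub_apply, ContinuousLinearMap.smul_apply,
        ContinuousLinearMap.one_apply]
      rw [hx, sub_self])
    simp only [ContinuousLinearMap.sub_apply, ContinuousLinearMap.smul_apply,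
        ContinuousLinearMap.one_apply] at this
    exact (sub_eq_zero.1 this).symm
  obtain ⟨r₀, hr₀, hiso⟩ := aux_isolated T hT hμ K hK hasc
  let E : ℕ → Set ℂ := fun h => {z | ∃ u : H, u ≠ 0 ∧ Th h u = z • u}
  have hE : ∀ ε > 0, ∀ᶠ h in atTop, ∃ z ∈ E h, ‖z - μ‖ < ε := by
    intro ε hε
    have hμn : 0 < ‖μ‖ := norm_pos_iff.2 hμ
    obtain ⟨r, hr, hr'⟩ := exists_between (lt_min hr₀ (lt_min hε (half_pos hμn)))
    simp only [lt_min_iff] at hr'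
    obtain ⟨hr1, hr2, hr3⟩ := hr'
    have hbig : ∀ z : ℂ, ‖z - μ‖ ≤ r → ‖μ‖ / 2 < ‖z‖ := fun z hz => by
      have := norm_sub_norm_le μ z
      rw [norm_sub_rev] at this
      linarith
    have hres : ∀ z, ‖z - μ‖ = r → z ∈ resolventSet ℂ T := by
      intro z hz
      have hz0 : z ≠ 0 := norm_pos_iff.1 (by linarith [hbig z hz.le])
      refine (hT.hasEigenvalue_or_mem_resolventSet hz0).resolve_left fun h => ?_
      obtain ⟨u, hu⟩ := h.exists_hasEigenvector
      refine hu.2 (hiso z ?_ (by linarith) u hu.apply_eq_smul)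
      rintro rfl
      simp at hz
      linarith
    obtain ⟨δ, hδ, hS⟩ := aux_exists T μ u₀ hu₀ hTu₀ hr hres
    filter_upwards [hconv.eventually_lt_const hδ, hconv.eventually_lt_const (half_pos hμn)]
      with h h1 h2
    obtain ⟨z, hz, hzr⟩ := hS (Th h) h1
    exact ⟨z, aux_fredholm T hT (Th h) (h2.trans (hbig z hzr)) hz, hzr.trans_lt hr2⟩
  obtain ⟨N, hN⟩ := eventually_atTop.1 (hE 1 one_pos)
  have hsel : ∀ h, ∃ z : ℂ, h ≥ N → z ∈ E h ∧
      ∀ z' ∈ E h, ‖z - μ‖ < ‖z' - μ‖ + 1 / ((h : ℝ) + 1) := by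
    intro h
    by_cases hh : h ≥ N
    · obtain ⟨z₁, hz₁, -⟩ := hN h hh
      have hne : ((fun z => ‖z - μ‖) '' E h).Nonempty := ⟨_, z₁, hz₁, rfl⟩
      have hbd : BddBelow ((fun z => ‖z - μ‖) '' E h) :=
        ⟨0, by rintro _ ⟨z, -, rfl⟩; exact norm_nonneg _⟩
      obtain ⟨_, ⟨z, hz, rfl⟩, hlt⟩ := Real.lt_sInf_add_pos hne
        (show (0 : ℝ) < 1 / ((h : ℝ) + 1) by positivity)
      refine ⟨z, fun _ => ⟨hz, fun z' hz' => hlt.trans_le ?_⟩⟩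
      have := csInf_le hbd ⟨z', hz', rfl⟩
      simpa using this
    · exact ⟨0, fun h' => absurd h' hh⟩
  choose z hz using hsel
  have hzlim : Tendsto z atTop (𝓝 μ) := by
    rw [tendsto_iff_norm_sub_tendsto_zero]
    refine Metric.tendsto_nhds.2 fun ε hε => ?_
    have h1 := (tendsto_one_div_add_atTop_nhds_zero_nat (𝕜 := ℝ)).eventually_lt_const (half_pos hε)
    filter_upwards [hE (ε / 2) (half_pos hε), h1, eventually_ge_atTop N] with h ⟨z', hz', hlt⟩ h2 h3
    have := (hz h h3).2 z' hz'
    simp only [dist_zero_right, norm_norm]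
    linarith
  refine ⟨N, fun h => (z h)⁻¹, ?_, ?_, ?_⟩
  · intro h hh
    simp only [inv_inv]
    exact (hz h hh).1
  · have := hzlim.inv₀ hμ
    simpa [hμdef] using this
  · intro uh huh
    simp only [inv_inv] at huh
    have hlim : Tendsto (fun n => μ • uh n - T (uh n)) atTop (𝓝 0) := by
      have hb : Tendsto (fun n => ‖z n - μ‖ + ‖Th n - T‖) atTop (𝓝 0) := by
        simpa using (tendsto_iff_norm_sub_tendsto_zero.1 hzlim).add hconv
      refine squeeze_zero_norm' ?_ hb
      filter_upwards [eventually_ge_atTop N] with n hn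
      obtain ⟨h1, h2⟩ := huh n hn
      have : μ • uh n - T (uh n) = (Th n - T) (uh n) - (z n - μ) • uh n := by
        rw [ContinuousLinearMap.sub_apply, h2, sub_smul]; abel
      rw [this]
      refine (norm_sub_le _ _).trans ?_
      have h3 := (Th n - T).le_opNorm (uh n)
      rw [norm_smul, h1]
      rw [h1] at h3
      linarith
    have hp := aux_proj T hT hμ K hK uh hlim
    refine ⟨fun n => if K.starProjection (uh n) = 0 then u₀ else K.starProjection (uh n), ?_, ?_⟩
    · intro n
      dsimp only
      split_ifs with h0
      · exact ⟨hu₀, hTu₀⟩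
      · exact ⟨h0, (hK _).1 (K.starProjection_apply_mem _)⟩
    · refine hp.congr' ?_
      filter_upwards [hp.eventually_lt_const one_pos, eventually_ge_atTop N] with n h1 h2
      rw [if_neg]
      intro h0
      rw [h0, sub_zero, (huh n h2).1] at h1
      exact lt_irrefl _ h1
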